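/- arXiv:1411.0960 — 5 statements merged into one kernel-verified Lean document; each statement's English description precedes it below -/
import Mathlib

section
/- Let c be a positive integer and set a = (3/2)/(3c+2). Then for every real M > 0 and every real β with 0 ≤ β ≤ M, we have max( (2M − β)/M , (2M + (2a/3)·β)/(2M) ) ≥ 1 + 1/(6c+5). -/
/-!
Put `x = β / M`. Since `2a/3 = 1/(3c+2)`, the two ratios are `2 - x`, decreasing in `x`, and
`1 + x / (6c + 4)`, increasing in `x`. They cross at `x = (6c + 4) / (6c + 5)`, where both equal
`1 + 1 / (6c + 5)`; so to the left of this point the first ratio is at least the bound, and to the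
right the second one is.
-/

/-- Let `c` be a positive integer and `a = (3/2)/(3c+2)`. Then for every real
`M > 0` and every real `β` with `0 ≤ β ≤ M`, we have
`max ((2M − β)/M) ((2M + (2a/3)·β)/(2M)) ≥ 1 + 1/(6c+5)`. -/
theorem lower_bound_core_inequality (c : ℕ) (hc : 0 < c) (a : ℝ)
    (ha : a = (3 / 2) / (3 * (c : ℝ) + 2)) :
    ∀ M β : ℝ, 0 < M → 0 ≤ β → β ≤ M →
      1 + 1 / (6 * (c : ℝ) + 5) ≤
        max ((2 * M - β) / M) ((2 * M + (2 * a / 3) * β) / (2 * M)) := by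
  intro M β hM _ _
  have hc0 : (0 : ℝ) ≤ c := c.cast_nonneg
  have h5 : (0 : ℝ) < 6 * c + 5 := by positivity
  have h2 : (0 : ℝ) < 3 * c + 2 := by positivity
  have e1 : (1 : ℝ) + 1 / (6 * c + 5) = (6 * c + 6) / (6 * c + 5) := by
    field_simp
    ring
  have e2 : (2 * M + (2 * a / 3) * β) / (2 * M)
      = (2 * M * (3 * c + 2) + β) / (2 * M * (3 * c + 2)) := by
    rw [ha]
    field_simp
  rw [e1, e2, le_max_iff]
  -- Split at the crossing point `β / M = (6c + 4) / (6c + 5)`.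
  rcases le_total ((6 * c + 5) * β) ((6 * c + 4) * M) with h | h
  · left
    rw [div_le_div_iff₀ h5 hM]
    linarith
  · right
    rw [div_le_div_iff₀ h5 (by positivity)]
    nlinarith [mul_le_mul_of_nonneg_left h h2.le]
end

section
/- Let ε be a real number with 0 < ε ≤ 1, let W be a finite index set with |W| ≤ log₂(1/ε) + 5, let S_ℓ ≥ 0 for ℓ ∈ W be real numbers with total sum S = ∑_{ℓ∈W} S_ℓ satisfying S > (8/ε)·(⌈log₂(1/ε)⌉ + 5), and set k = ⌊ S·ε / (2(⌊log₂(1/ε)⌋ + 5)) ⌋. If q_ℓ are real numbers with q_ℓ ≤ 2·S_ℓ/(k−1) + 2 for every ℓ ∈ W, then ∑_{ℓ∈W} q_ℓ ≤ (8/ε + 2)·(log₂(1/ε) + 5). -/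
/-!
Write `L = log₂(1/ε) ≥ 0`, `m = ⌊L⌋ + 5` and `x = S·ε / (2m)`, so that `k = ⌊x⌋`. The lower bound on
`S` gives `x > 4`, hence `k - 1 > x - 2 > x / 2`: the floor and the subtracted one cost at most a
factor of two. Summing the bounds on `q ℓ` then yields
`2S/(k-1) + 2|W| ≤ 4S/x + 2|W| = 8m/ε + 2|W|`, and both `m` and `|W|` are at most `L + 5`.
-/


/-- Lemma 1, abstract form: Let `0 < ε ≤ 1`, `W` a finite index set with
`|W| ≤ log₂(1/ε) + 5`, `Sf ℓ ≥ 0` with total sum `S = ∑_{ℓ∈W} Sf ℓ` satisfying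
`S > (8/ε)·(⌈log₂(1/ε)⌉ + 5)`, and `k = ⌊S·ε / (2(⌊log₂(1/ε)⌋ + 5))⌋`.
If `q ℓ ≤ 2·Sf ℓ/(k−1) + 2` for every `ℓ ∈ W`, then
`∑_{ℓ∈W} q ℓ ≤ (8/ε + 2)·(log₂(1/ε) + 5)`. -/
theorem number_of_groups_bound {ι : Type*} (W : Finset ι) (ε : ℝ)
    (hε : 0 < ε) (hε1 : ε ≤ 1)
    (hW : (W.card : ℝ) ≤ Real.logb 2 (1 / ε) + 5)
    (Sf : ι → ℝ) (hSf : ∀ ℓ ∈ W, 0 ≤ Sf ℓ)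
    (S : ℝ) (hS : S = ∑ ℓ ∈ W, Sf ℓ)
    (hSbig : S > (8 / ε) * ((⌈Real.logb 2 (1 / ε)⌉ : ℝ) + 5))
    (k : ℤ) (hk : k = ⌊S * ε / (2 * ((⌊Real.logb 2 (1 / ε)⌋ : ℝ) + 5))⌋)
    (q : ι → ℝ) (hq : ∀ ℓ ∈ W, q ℓ ≤ 2 * Sf ℓ / ((k : ℝ) - 1) + 2) :
    ∑ ℓ ∈ W, q ℓ ≤ (8 / ε + 2) * (Real.logb 2 (1 / ε) + 5) := by
  set L := Real.logb 2 (1 / ε)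
  have hL : 0 ≤ L := Real.logb_nonneg (by norm_num) ((one_le_div hε).2 hε1)
  have hf0 : (0 : ℝ) ≤ (⌊L⌋ : ℝ) := by exact_mod_cast Int.floor_nonneg.2 hL
  have hfL : (⌊L⌋ : ℝ) ≤ L := Int.floor_le L
  have hLc : L ≤ (⌈L⌉ : ℝ) := Int.le_ceil L
  set m : ℝ := (⌊L⌋ : ℝ) + 5 with hm
  have hm0 : 0 < m := by linarith
  have hSm : 8 * m < S * ε := by
    have h : 8 / ε * m ≤ 8 / ε * ((⌈L⌉ : ℝ) + 5) :=
      mul_le_mul_of_nonneg_left (by linarith) (by positivity)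
    have h' : 8 * m / ε < S := by
      rw [mul_div_right_comm]
      exact h.trans_lt hSbig
    exact (div_lt_iff₀ hε).1 h'
  set x : ℝ := S * ε / (2 * m) with hx
  have hx4 : 4 < x := by
    rw [hx, lt_div_iff₀ (by positivity)]
    linarith
  have hkx : x / 2 < (k : ℝ) - 1 := by
    have := Int.lt_floor_add_one x
    rw [← hk] at this
    linarith
  have hS0 : 0 < S := pos_of_mul_pos_left (by linarith) hε.le
  calc ∑ ℓ ∈ W, q ℓ ≤ ∑ ℓ ∈ W, (2 * Sf ℓ / ((k : ℝ) - 1) + 2) := Finset.sum_le_sum hq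
    _ = 2 * S / ((k : ℝ) - 1) + 2 * W.card := by
      rw [Finset.sum_add_distrib, ← Finset.sum_div, ← Finset.mul_sum, ← hS]
      simp [mul_comm]
    _ ≤ 2 * S / (x / 2) + 2 * W.card := by
      have : 0 < x / 2 := by linarith
      gcongr
    _ = 8 / ε * m + 2 * W.card := by
      rw [hx]
      field_simp
      ring
    _ ≤ 8 / ε * (L + 5) + 2 * (L + 5) := by
      gcongr
      linarith
    _ = (8 / ε + 2) * (L + 5) := by ring
end

section
/- Let 0 < ε ≤ 1 and let (I,s) be a bin packing instance in which every item satisfies s(i) > ε/14. Let k be a positive integer with 2k·(⌊log₂(1/ε)⌋ + 5) ≤ ε·SIZE(I,s). Suppose R : I → ℕ × {A,B} × ℕ is a rounding function assigning each item a group (ℓ, X, r), satisfying: (a) if R(i) = (ℓ,X,r) then 2^{−(ℓ+1)} < s(i) ≤ 2^{−ℓ}; (b) if R(i) = (ℓ,X₁,r₁) and R(i′) = (ℓ,X₂,r₂) and (ℓ,X₁,r₁) is left of (ℓ,X₂,r₂) (i.e., X₁ = A and X₂ = B, or X₁ = X₂ and r₁ < r₂), then s(i) ≥ s(i′); (c)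 for each ℓ, the group (ℓ,A,r) contains exactly 2^ℓ·k items for every 1 ≤ r ≤ q(ℓ,A), and (ℓ,A,0) contains at most 2^ℓ·k items, where q(ℓ,A) is the largest r with (ℓ,A,r) nonempty; (d) for each ℓ, the group (ℓ,B,r) contains exactly 2^ℓ·(k−1) items for every 0 ≤ r ≤ q(ℓ,B)−1, and (ℓ,B,q(ℓ,B)) contains at most 2^ℓ·(k−1) items, where q(ℓ,B) is the largest r with (ℓ,B,r) nonempty. Define the rounded size function s^R by s^R(i) = max{ s(i′) : R(i′) = R(i) }. Then OPT(I, s^R) ≤ (1 + ε)·OPT(I, s). -/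
/-!
The rounded instance is packed by shifting every group one place to the left. In each size
category `ℓ` at most two groups are *special*: `A_0`, together with `A_1` if block `A` has a group
`A_r` with `r ≥ 1`, and with `B_0` otherwise. Every other nonempty group has a group directly to its
left (`A_{r-1}` for `A_r`, `B_{r-1}` for `B_r`, and the last group of block `A` for `B_0`) which has
at least as many items, all of them at least as large as every item of the given group; distinct
groups have distinct left neighbours. Hence there is an injection from the nonspecial items to all
items under which rounded sizes are dominated by original sizes, and the nonspecial items fit into
the bins of an optimal packing of the original instance (`packing_combine`, `exists_shift`).

The special items of category `ℓ` number at most `2^ℓ · 2k` and have rounded size at most `2^{-ℓ}`,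
so they fit into `2k` further bins with `2^ℓ` items each. Since all sizes exceed `ε/14`, only
categories `ℓ < ⌊log₂(1/ε)⌋ + 5` occur (`category_lt`), so the number of additional bins is at most
`2k(⌊log₂(1/ε)⌋ + 5) ≤ ε · SIZE ≤ ε · OPT`.
-/

/-- A packing of the items of `I` (with sizes `s`) into `k` unit-sized bins. -/
def IsPacking {ι : Type*} (I : Finset ι) (s : ι → ℝ) {k : ℕ} (B : I → Fin k) : Prop :=
  ∀ j : Fin k, ∑ i ∈ Finset.univ.filter (fun i : I => B i = j), s i.1 ≤ 1

/-- `binOPT I s` is the least number of unit bins into which `(I, s)` can be packed. -/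
noncomputable def binOPT {ι : Type*} (I : Finset ι) (s : ι → ℝ) : ℕ :=
  sInf {k : ℕ | ∃ B : I → Fin k, IsPacking I s B}

/-- `binSIZE I s` is the total size of all items. -/
def binSIZE {ι : Type*} (I : Finset ι) (s : ι → ℝ) : ℝ := ∑ i ∈ I, s i

/-- Group `g₁ = (ℓ₁,X₁,r₁)` is (strictly) left of `g₂ = (ℓ₂,X₂,r₂)` (same size category):
`ℓ₁ = ℓ₂` and either `X₁ = A ∧ X₂ = B`, or `X₁ = X₂ ∧ r₁ < r₂`.
Here block `A` is encoded by `false` and block `B` by `true`. -/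
def GroupLeftOf (g₁ g₂ : ℕ × Bool × ℕ) : Prop :=
  g₁.1 = g₂.1 ∧
    ((g₁.2.1 = false ∧ g₂.2.1 = true) ∨ (g₁.2.1 = g₂.2.1 ∧ g₁.2.2 < g₂.2.2))

/-! ### Optimal packings -/

lemma binOPT_le_card {ι β : Type*} [Fintype β] [DecidableEq β] (I : Finset ι) (s : ι → ℝ)
    (B : I → β) (h : ∀ b, ∑ i ∈ Finset.univ.filter (fun i : I => B i = b), s i.1 ≤ 1) :
    binOPT I s ≤ Fintype.card β := by
  refine Nat.sInf_le ⟨fun i => Fintype.equivFin β (B i), fun j => ?_⟩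
  simpa [← Equiv.eq_symm_apply] using h ((Fintype.equivFin β).symm j)

lemma exists_isPacking_binOPT {ι : Type*} (I : Finset ι) (s : ι → ℝ) (hs : ∀ i ∈ I, s i ≤ 1) :
    ∃ B : I → Fin (binOPT I s), IsPacking I s B := by
  have hne : {k : ℕ | ∃ B : I → Fin k, IsPacking I s B}.Nonempty := by
    -- one bin per item
    refine ⟨Fintype.card I, Fintype.equivFin I, fun j => ?_⟩
    have hj : (Finset.univ.filter (fun i : I => Fintype.equivFin I i = j))
        = {(Fintype.equivFin I).symm j} := by
      ext i
      simp [← Equiv.eq_symm_apply]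
    rw [hj, Finset.sum_singleton]
    exact hs _ ((Fintype.equivFin I).symm j).2
  exact Nat.sInf_mem hne

lemma binSIZE_le_binOPT {ι : Type*} (I : Finset ι) (s : ι → ℝ) (hs : ∀ i ∈ I, s i ≤ 1) :
    binSIZE I s ≤ binOPT I s := by
  obtain ⟨B, hB⟩ := exists_isPacking_binOPT I s hs
  have h1 : binSIZE I s = ∑ i : I, s i.1 := (Finset.sum_coe_sort I s).symm
  rw [h1, ← Finset.sum_fiberwise Finset.univ B (fun i : I => s i.1)]
  calc _ ≤ ∑ _j : Fin (binOPT I s), (1 : ℝ) := Finset.sum_le_sum fun j _ => hB j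
    _ = _ := by simp

/-! ### Combining and lifting packings -/

/-- If the special items (those satisfying `P`) fit into the bins `γ`, and the others are
injectively matched with items at least as large in a packing `B` of sizes `s`, then all items fit
into the disjoint union of both families of bins. -/
lemma packing_combine {α β γ : Type*} [Fintype α] [DecidableEq β] [DecidableEq γ]
    (s t : α → ℝ) (hs : ∀ i, 0 ≤ s i) (P : α → Prop) [DecidablePred P] (B : α → β)
    (hB : ∀ b, ∑ i ∈ Finset.univ.filter (fun i => B i = b), s i ≤ 1)
    (φ : α → α) (hinj : Set.InjOn φ {i | ¬ P i}) (hφ : ∀ i, ¬ P i → t i ≤ s (φ i))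
    (C : α → γ) (hC : ∀ c, ∑ i ∈ Finset.univ.filter (fun i => P i ∧ C i = c), t i ≤ 1) :
    ∀ d : β ⊕ γ, ∑ i ∈ Finset.univ.filter
      (fun i => (if P i then Sum.inr (C i) else Sum.inl (B (φ i)) : β ⊕ γ) = d), t i ≤ 1 := by
  classical
  rintro (b | c)
  · have h1 : Finset.univ.filter
        (fun i => (if P i then Sum.inr (C i) else Sum.inl (B (φ i)) : β ⊕ γ) = Sum.inl b)
        = Finset.univ.filter (fun i => ¬ P i ∧ B (φ i) = b) := by
      ext i
      by_cases h : P i <;> simp [h]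
    rw [h1]
    calc _ ≤ ∑ i ∈ Finset.univ.filter (fun i => ¬ P i ∧ B (φ i) = b), s (φ i) :=
          Finset.sum_le_sum fun i hi => hφ i (Finset.mem_filter.1 hi).2.1
      _ = ∑ i ∈ (Finset.univ.filter (fun i => ¬ P i ∧ B (φ i) = b)).image φ, s i := by
          refine (Finset.sum_image fun x hx y hy hxy => hinj ?_ ?_ hxy).symm
          · exact (Finset.mem_filter.1 hx).2.1
          · exact (Finset.mem_filter.1 hy).2.1
      _ ≤ ∑ i ∈ Finset.univ.filter (fun i => B i = b), s i := by
          refine Finset.sum_le_sum_of_subset_of_nonneg ?_ fun i _ _ => hs i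
          intro j hj
          obtain ⟨i, hi, rfl⟩ := Finset.mem_image.1 hj
          simpa using (Finset.mem_filter.1 hi).2.2
      _ ≤ 1 := hB b
  · have h1 : Finset.univ.filter
        (fun i => (if P i then Sum.inr (C i) else Sum.inl (B (φ i)) : β ⊕ γ) = Sum.inr c)
        = Finset.univ.filter (fun i => P i ∧ C i = c) := by
      ext i
      by_cases h : P i <;> simp [h]
    rw [h1]
    exact hC c

/-- A map `p` on groups, injective on the groups meeting `J` and not decreasing their cardinality,
lifts to a map on items that is injective on `J`. -/
lemma exists_shift {α γ : Type*} [Fintype α] [DecidableEq γ] (R : α → γ) (p : γ → γ) (J : Set α)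
    (hcard : ∀ i ∈ J, (Finset.univ.filter (fun j => R j = R i)).card
      ≤ (Finset.univ.filter (fun j => R j = p (R i))).card)
    (hp : ∀ i ∈ J, ∀ j ∈ J, p (R i) = p (R j) → R i = R j) :
    ∃ φ : α → α, Set.InjOn φ J ∧ ∀ i ∈ J, R (φ i) = p (R i) := by
  classical
  have key : ∀ g : γ, ∃ f : α → α, (Finset.univ.filter (fun j => R j = g)).card
      ≤ (Finset.univ.filter (fun j => R j = p g)).card →
      (∀ i, R i = g → R (f i) = p g) ∧ ∀ i j, R i = g → R j = g → f i = f j → i = j := by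
    intro g
    by_cases h : (Finset.univ.filter (fun j => R j = g)).card
      ≤ (Finset.univ.filter (fun j => R j = p g)).card
    · have h' : Fintype.card {j // R j = g} ≤ Fintype.card {j // R j = p g} := by
        simpa [Fintype.card_subtype] using h
      obtain ⟨e⟩ := Function.Embedding.nonempty_of_card_le h'
      refine ⟨fun x => if hx : R x = g then (e ⟨x, hx⟩).1 else x, fun _ => ⟨?_, ?_⟩⟩
      · intro i hi
        simpa [hi] using (e ⟨i, hi⟩).2
      · intro i j hi hj hij
        simp only [hi, hj, dif_pos] at hij
        simpa using e.injective (Subtype.ext hij)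
    · exact ⟨id, fun h' => absurd h' h⟩
  choose f hf using key
  refine ⟨fun i => f (R i) i, ?_, fun i hi => (hf (R i) (hcard i hi)).1 i rfl⟩
  intro i hi j hj hij
  have hRi := (hf (R i) (hcard i hi)).1 i rfl
  have hRj := (hf (R j) (hcard j hj)).1 j rfl
  have hR : R i = R j := hp i hi j hj (by rw [← hRi, ← hRj]; exact congrArg R hij)
  refine (hf (R i) (hcard i hi)).2 i j rfl hR.symm ?_
  simpa [hR] using hij

/-- The items selected by `P` can be distributed into `m` bins per size category: a category `ℓ`
has at most `2^ℓ * m` of them, so each bin receives at most `2^ℓ` items of size at most `2^{-ℓ}`. -/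
lemma exists_special_packing {α : Type*} [Fintype α] (t : α → ℝ) (lev : α → ℕ) (P : α → Prop)
    [DecidablePred P] (L m : ℕ) (hm : 0 < m) (hL : ∀ i, lev i < L)
    (ht : ∀ i, t i ≤ (2 : ℝ) ^ (-(lev i : ℤ)))
    (hcard : ∀ ℓ, (Finset.univ.filter (fun i => P i ∧ lev i = ℓ)).card ≤ 2 ^ ℓ * m) :
    ∃ C : α → Fin L × Fin m,
      ∀ c, ∑ i ∈ Finset.univ.filter (fun i => P i ∧ C i = c), t i ≤ 1 := by
  classical
  have key : ∀ ℓ : ℕ, ∃ f : α → Fin m × Fin (2 ^ ℓ),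
      ∀ i j, (P i ∧ lev i = ℓ) → (P j ∧ lev j = ℓ) → f i = f j → i = j := by
    intro ℓ
    have h' : Fintype.card {i // P i ∧ lev i = ℓ} ≤ Fintype.card (Fin m × Fin (2 ^ ℓ)) := by
      rw [Fintype.card_subtype, Fintype.card_prod, Fintype.card_fin, Fintype.card_fin, mul_comm]
      exact hcard ℓ
    obtain ⟨e⟩ := Function.Embedding.nonempty_of_card_le h'
    refine ⟨fun x => if hx : P x ∧ lev x = ℓ then e ⟨x, hx⟩ else (⟨0, hm⟩, ⟨0, by positivity⟩),
      fun i j hi hj hij => ?_⟩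
    simp only [dif_pos hi, dif_pos hj] at hij
    simpa using e.injective hij
  choose f hf using key
  refine ⟨fun i => (⟨lev i, hL i⟩, (f (lev i) i).1), ?_⟩
  rintro ⟨⟨ℓ, hℓ⟩, b⟩
  set S := Finset.univ.filter
    (fun i => P i ∧ ((⟨lev i, hL i⟩, (f (lev i) i).1) : Fin L × Fin m) = (⟨ℓ, hℓ⟩, b)) with hS
  have hmem : ∀ i ∈ S, P i ∧ lev i = ℓ ∧ (f ℓ i).1 = b := by
    intro i hi
    obtain ⟨h1, h2⟩ := (Finset.mem_filter.1 hi).2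
    simp only [Prod.mk.injEq, Fin.mk.injEq] at h2
    obtain ⟨h2, h3⟩ := h2
    subst h2
    exact ⟨h1, rfl, h3⟩
  have hSc : S.card ≤ 2 ^ ℓ := by
    have := Finset.card_le_card_of_injOn (s := S) (t := (Finset.univ : Finset (Fin (2 ^ ℓ))))
      (fun i => (f ℓ i).2) (fun _ _ => by simp) (by
        intro i hi j hj hij
        obtain ⟨a1, a2, a3⟩ := hmem i hi
        obtain ⟨b1, b2, b3⟩ := hmem j hj
        exact hf ℓ i j ⟨a1, a2⟩ ⟨b1, b2⟩ (Prod.ext (a3.trans b3.symm) hij))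
    simpa using this
  calc ∑ i ∈ S, t i ≤ ∑ _i ∈ S, (2 : ℝ) ^ (-(ℓ : ℤ)) := by
        refine Finset.sum_le_sum fun i hi => ?_
        have := ht i
        rwa [(hmem i hi).2.1] at this
    _ = S.card * (2 : ℝ) ^ (-(ℓ : ℤ)) := by simp
    _ ≤ (2 ^ ℓ : ℝ) * (2 : ℝ) ^ (-(ℓ : ℤ)) := by
        gcongr
        exact_mod_cast hSc
    _ = 1 := by
        rw [zpow_neg, zpow_natCast]
        field_simp

/-! ### Size categories and group positions -/

/-- Only size categories below `⌊log₂(1/ε)⌋ + 5` contain sizes exceeding `ε/14`; the slack is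
`14 < 2^4` plus one from the floor. -/
lemma category_lt (ε x : ℝ) (hε : 0 < ε) (ℓ : ℕ) (h1 : ε / 14 < x)
    (h2 : x ≤ (2 : ℝ) ^ (-(ℓ : ℤ))) : (ℓ : ℤ) < ⌊Real.logb 2 (1 / ε)⌋ + 5 := by
  have h3 : (2 : ℝ) ^ ℓ < 16 * (1 / ε) := by
    have h4 : ε / 14 < ((2 : ℝ) ^ ℓ)⁻¹ := by
      have := h1.trans_le h2
      rwa [zpow_neg, zpow_natCast] at this
    have hp : (0 : ℝ) < 2 ^ ℓ := by positivity
    rw [lt_inv_comm₀ (by positivity) hp, inv_div] at h4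
    refine h4.trans ?_
    rw [mul_one_div]
    gcongr
    norm_num
  have h5 : (ℓ : ℝ) < 4 + Real.logb 2 (1 / ε) := by
    have h6 := Real.logb_lt_logb (b := 2) (by norm_num) (by positivity) h3
    rw [Real.logb_mul (by norm_num) (by positivity), Real.logb_pow,
      show (16 : ℝ) = 2 ^ 4 by norm_num, Real.logb_pow] at h6
    simpa using h6
  have h7 := Int.lt_floor_add_one (Real.logb 2 (1 / ε))
  have h8 : (ℓ : ℝ) < (⌊Real.logb 2 (1 / ε)⌋ : ℝ) + 5 := by linarith
  exact_mod_cast h8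

/-- The position of a nonempty group is at most the last position `q(ℓ, X)` of its block; the
supremum is not a junk value, as only finitely many groups are nonempty. -/
lemma le_lastPos {ι : Type*} (I : Finset ι) (R : ι → ℕ × Bool × ℕ) (ℓ : ℕ) (X : Bool) (r : ℕ)
    {i : ι} (hi : i ∈ I) (hR : R i = (ℓ, X, r)) :
    r ≤ sSup {r' : ℕ | 0 < (I.filter (fun i => R i = (ℓ, X, r'))).card} := by
  refine le_csSup ?_ (Finset.card_pos.2 ⟨i, Finset.mem_filter.2 ⟨hi, hR⟩⟩)
  refine (Set.Finite.subset (I.finite_toSet.image (fun i => (R i).2.2)) ?_).bddAbove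
  intro r' hr'
  obtain ⟨j, hj⟩ := Finset.card_pos.1 hr'
  obtain ⟨hj1, hj2⟩ := Finset.mem_filter.1 hj
  exact ⟨j, hj1, by simp [hj2]⟩

/-! ### The left neighbour of a group -/

/-- Whether a group is not shifted but packed into additional bins; `q ℓ` stands for the last
position of block `A` in category `ℓ`. The groups are `A_0`, `A_1`, and `B_0` if `q ℓ = 0` (in which
case `A_1` is empty). -/
def IsSpecialGroup (q : ℕ → ℕ) (g : ℕ × Bool × ℕ) : Prop :=
  (g.2.1 = false ∧ g.2.2 ≤ 1) ∨ (g.2.1 = true ∧ g.2.2 = 0 ∧ q g.1 = 0)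

/-- The group directly to the left of a nonspecial group, `q ℓ` being the last position of block
`A` in category `ℓ`. -/
def leftGroup (q : ℕ → ℕ) (g : ℕ × Bool × ℕ) : ℕ × Bool × ℕ :=
  if g.2.1 = true ∧ g.2.2 = 0 then (g.1, false, q g.1) else (g.1, g.2.1, g.2.2 - 1)

lemma leftGroup_groupLeftOf (q : ℕ → ℕ) (g : ℕ × Bool × ℕ) (hg : ¬ IsSpecialGroup q g) :
    GroupLeftOf (leftGroup q g) g := by
  obtain ⟨ℓ, X, r⟩ := g
  cases X <;> simp [IsSpecialGroup, leftGroup, GroupLeftOf] at hg ⊢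
  · omega
  · split_ifs with h <;> simp
    omega

lemma leftGroup_inj (q : ℕ → ℕ) (g g' : ℕ × Bool × ℕ)
    (hg : ¬ IsSpecialGroup q g) (hg' : ¬ IsSpecialGroup q g')
    (hq : g.2.1 = false → g.2.2 ≤ q g.1) (hq' : g'.2.1 = false → g'.2.2 ≤ q g'.1)
    (h : leftGroup q g = leftGroup q g') : g = g' := by
  obtain ⟨ℓ, X, r⟩ := g
  obtain ⟨ℓ', X', r'⟩ := g'
  cases X <;> cases X' <;> by_cases h0 : r = 0 <;> by_cases h0' : r' = 0 <;>
    simp [IsSpecialGroup, leftGroup, h0, h0'] at hg hg' hq hq' h ⊢ <;>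
    grind

/-! ### The rounding error -/

/-- Lemma 2: if every item of `(I,s)` has size `> ε/14` (and `≤ 1`), `k` is a
positive integer with `2k(⌊log₂(1/ε)⌋+5) ≤ ε·SIZE(I,s)`, and `R` is a rounding function
satisfying properties (a)–(d), then with `s^R i = max { s i' : R i' = R i }` we have
`OPT(I, s^R) ≤ (1+ε)·OPT(I, s)`.
For a size category `ℓ` and a block `X`, the quantity `q(ℓ,X)` (the largest position `r`
whose group is nonempty) is expressed as `sSup {r | the group (ℓ,X,r) is nonempty}`. -/
theorem rounding_error_bound {ι : Type*} [DecidableEq ι] (ε : ℝ) (hε : 0 < ε) (hε1 : ε ≤ 1)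
    (I : Finset ι) (s : ι → ℝ)
    (hs : ∀ i ∈ I, ε / 14 < s i ∧ s i ≤ 1)
    (k : ℕ) (hk : 0 < k)
    (hksize : 2 * (k : ℝ) * ((⌊Real.logb 2 (1 / ε)⌋ : ℝ) + 5) ≤ ε * binSIZE I s)
    (R : ι → ℕ × Bool × ℕ)
    -- (a): items are categorized correctly according to their sizes
    (hA : ∀ i ∈ I, (2 : ℝ) ^ (-(((R i).1 : ℤ) + 1)) < s i ∧ s i ≤ (2 : ℝ) ^ (-((R i).1 : ℤ)))
    -- (b): within a size category, items are sorted by size from left to right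
    (hB : ∀ i ∈ I, ∀ i' ∈ I, GroupLeftOf (R i) (R i') → s i' ≤ s i)
    -- (c): every group (ℓ,A,r) with 1 ≤ r ≤ q(ℓ,A) has exactly 2^ℓ·k items,
    --      and (ℓ,A,0) has at most 2^ℓ·k items
    (hC : ∀ ℓ r : ℕ, 1 ≤ r →
      r ≤ sSup {r' : ℕ | 0 < (I.filter (fun i => R i = (ℓ, false, r'))).card} →
      (I.filter (fun i => R i = (ℓ, false, r))).card = 2 ^ ℓ * k)
    (hC0 : ∀ ℓ : ℕ, (I.filter (fun i => R i = (ℓ, false, 0))).card ≤ 2 ^ ℓ * k)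
    -- (d): every group (ℓ,B,r) with 0 ≤ r ≤ q(ℓ,B)−1 has exactly 2^ℓ·(k−1) items,
    --      and (ℓ,B,q(ℓ,B)) has at most 2^ℓ·(k−1) items
    (hD : ∀ ℓ r : ℕ,
      r + 1 ≤ sSup {r' : ℕ | 0 < (I.filter (fun i => R i = (ℓ, true, r'))).card} →
      (I.filter (fun i => R i = (ℓ, true, r))).card = 2 ^ ℓ * (k - 1))
    (hDq : ∀ ℓ : ℕ,
      (I.filter (fun i => R i =
        (ℓ, true, sSup {r' : ℕ | 0 < (I.filter (fun i => R i = (ℓ, true, r'))).card}))).card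
        ≤ 2 ^ ℓ * (k - 1))
    -- the rounded size function: s^R(i) is the largest size of an item in i's group
    (sR : ι → ℝ)
    (hsR : ∀ i ∈ I, IsGreatest {x : ℝ | ∃ i' ∈ I, R i' = R i ∧ s i' = x} (sR i)) :
    (binOPT I sR : ℝ) ≤ (1 + ε) * (binOPT I s : ℝ) := by
  classical
  have hs1 : ∀ i ∈ I, s i ≤ 1 := fun i hi => (hs i hi).2
  set qA : ℕ → ℕ := fun ℓ =>
    sSup {r' : ℕ | 0 < (I.filter (fun i => R i = (ℓ, false, r'))).card} with hqA
  set qB : ℕ → ℕ := fun ℓ =>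
    sSup {r' : ℕ | 0 < (I.filter (fun i => R i = (ℓ, true, r'))).card} with hqB
  have hqA_le : ∀ i ∈ I, (R i).2.1 = false → (R i).2.2 ≤ qA (R i).1 := fun i hi h =>
    le_lastPos I R _ false _ hi (by rw [← h])
  have hqB_le : ∀ i ∈ I, (R i).2.1 = true → (R i).2.2 ≤ qB (R i).1 := fun i hi h =>
    le_lastPos I R _ true _ hi (by rw [← h])
  have hBcard : ∀ ℓ r : ℕ, r ≤ qB ℓ →
      (I.filter (fun i => R i = (ℓ, true, r))).card ≤ 2 ^ ℓ * (k - 1) := by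
    intro ℓ r hr
    rcases hr.lt_or_eq with h | h
    · exact (hD ℓ r h).le
    · rw [h]
      exact hDq ℓ
  have hkk : ∀ ℓ : ℕ, 2 ^ ℓ * (k - 1) ≤ 2 ^ ℓ * k := fun ℓ =>
    Nat.mul_le_mul_left _ (Nat.sub_le _ _)
  have hsub : ∀ (Q : ι → Prop) [DecidablePred Q], (Finset.univ.filter (fun i : I => Q i.1)).card
      = (I.filter Q).card := by
    intro Q _
    rw [Finset.card_filter, Finset.card_filter,
      Finset.sum_coe_sort I (fun i => if Q i then 1 else 0)]
  have hgroup : ∀ i ∈ I, ¬ IsSpecialGroup qA (R i) →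
      (I.filter (fun j => R j = R i)).card
        ≤ (I.filter (fun j => R j = leftGroup qA (R i))).card := by
    intro i hi hsp
    have h1 := hqA_le i hi
    have h2 := hqB_le i hi
    generalize R i = g at hsp h1 h2 ⊢
    obtain ⟨ℓ, X, r⟩ := g
    cases X
    · simp only [IsSpecialGroup, leftGroup] at hsp h1 ⊢
      simp at hsp h1 ⊢
      rw [hC ℓ r (by omega) h1, hC ℓ (r - 1) (by omega) (by simp only [hqA] at h1; omega)]
    · simp only [IsSpecialGroup, leftGroup] at hsp h2 ⊢
      simp at hsp h2 ⊢
      refine (hBcard ℓ r h2).trans ?_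
      split_ifs with h0
      · rw [hC ℓ (qA ℓ) (Nat.one_le_iff_ne_zero.2 (hsp h0)) le_rfl]
        exact hkk ℓ
      · rw [hD ℓ (r - 1) (by simp only [hqB] at h2; omega)]
  have hspecial : ∀ ℓ : ℕ,
      (I.filter (fun i => IsSpecialGroup qA (R i) ∧ (R i).1 = ℓ)).card ≤ 2 ^ ℓ * (2 * k) := by
    intro ℓ
    -- the second special group: `A_1` or `B_0`, whichever is relevant
    obtain ⟨g, hgc, hg⟩ : ∃ g : ℕ × Bool × ℕ,
        (I.filter (fun i => R i = g)).card ≤ 2 ^ ℓ * k ∧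
        ∀ i ∈ I, IsSpecialGroup qA (R i) → (R i).1 = ℓ → R i = (ℓ, false, 0) ∨ R i = g := by
      by_cases hq : qA ℓ = 0
      · refine ⟨(ℓ, true, 0), (hBcard ℓ 0 (Nat.zero_le _)).trans (hkk ℓ), ?_⟩
        intro i hi hsp hl
        have h1 := hqA_le i hi
        generalize R i = g at hsp hl h1 ⊢
        obtain ⟨ℓ', X, r⟩ := g
        simp only [IsSpecialGroup] at hsp h1 hl
        subst hl
        rw [hq] at h1
        cases X <;> simp at hsp h1 ⊢
        · exact h1
        · exact hsp.1
      · refine ⟨(ℓ, false, 1), (hC ℓ 1 le_rfl (Nat.one_le_iff_ne_zero.2 hq)).le, ?_⟩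
        intro i hi hsp hl
        generalize R i = g at hsp hl ⊢
        obtain ⟨ℓ', X, r⟩ := g
        simp only [IsSpecialGroup] at hsp hl
        subst hl
        cases X <;> simp [hq] at hsp ⊢
        omega
    calc _ ≤ ((I.filter (fun i => R i = (ℓ, false, 0))) ∪ (I.filter (fun i => R i = g))).card := by
          refine Finset.card_le_card fun i hi => ?_
          obtain ⟨hi, h1, h2⟩ := Finset.mem_filter.1 hi
          simpa [hi] using hg i hi h1 h2
      _ ≤ _ := Finset.card_union_le _ _
      _ ≤ 2 ^ ℓ * k + 2 ^ ℓ * k := Nat.add_le_add (hC0 ℓ) hgc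
      _ = _ := by ring
  have hsR_le : ∀ i ∈ I, sR i ≤ (2 : ℝ) ^ (-((R i).1 : ℤ)) := by
    intro i hi
    obtain ⟨j, hj, hRj, hsj⟩ := (hsR i hi).1
    rw [← hsj, ← hRj]
    exact (hA j hj).2
  have hf0 : 0 ≤ ⌊Real.logb 2 (1 / ε)⌋ := by
    refine Int.floor_nonneg.2 (Real.logb_nonneg (by norm_num) ?_)
    rw [le_div_iff₀ hε]
    linarith
  obtain ⟨L, hL⟩ := Int.eq_ofNat_of_zero_le (show 0 ≤ ⌊Real.logb 2 (1 / ε)⌋ + 5 by omega)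
  have hLR : (⌊Real.logb 2 (1 / ε)⌋ : ℝ) + 5 = L := by exact_mod_cast hL
  obtain ⟨B, hBp⟩ := exists_isPacking_binOPT I s hs1
  obtain ⟨φ, hφinj, hφ⟩ := exists_shift (fun i : I => R i.1) (leftGroup qA)
    {i | ¬ IsSpecialGroup qA (R i.1)}
    (fun i hi => by
      rw [hsub (fun j => R j = R i.1), hsub (fun j => R j = leftGroup qA (R i.1))]
      exact hgroup i.1 i.2 hi)
    (fun i hi j hj h =>
      leftGroup_inj qA _ _ hi hj (hqA_le i.1 i.2) (hqA_le j.1 j.2) h)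
  obtain ⟨C, hCp⟩ := exists_special_packing (fun i : I => sR i.1) (fun i => (R i.1).1)
    (fun i => IsSpecialGroup qA (R i.1)) L (2 * k) (by omega)
    (fun i => by
      have := category_lt ε (s i.1) hε (R i.1).1 (hs i.1 i.2).1 (hA i.1 i.2).2
      omega)
    (fun i => hsR_le i.1 i.2)
    (fun ℓ => by
      rw [hsub (fun i => IsSpecialGroup qA (R i) ∧ (R i).1 = ℓ)]
      exact hspecial ℓ)
  have hcomb := packing_combine (fun i : I => s i.1) (fun i : I => sR i.1)
    (fun i => (div_pos hε (by norm_num)).le.trans (hs i.1 i.2).1.le)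
    (fun i => IsSpecialGroup qA (R i.1)) B hBp φ hφinj
    (fun i hi => by
      obtain ⟨j, hj, hRj, hsj⟩ := (hsR i.1 i.2).1
      have h1 : R (φ i).1 = leftGroup qA (R i.1) := hφ i hi
      have h2 := leftGroup_groupLeftOf qA (R i.1) hi
      rw [← h1, ← hRj] at h2
      show sR i.1 ≤ s (φ i).1
      rw [← hsj]
      exact hB _ (φ i).2 j hj h2) C hCp
  have hfin := binOPT_le_card I sR _ hcomb
  simp only [Fintype.card_sum, Fintype.card_prod, Fintype.card_fin] at hfin
  have hfin' : (binOPT I sR : ℝ) ≤ binOPT I s + L * (2 * k) := by exact_mod_cast hfin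
  have hsize := mul_le_mul_of_nonneg_left (binSIZE_le_binOPT I s hs1) hε.le
  rw [hLR] at hksize
  nlinarith
end

section
/- Let m, n be natural numbers, let A be an m × n real matrix with nonnegative entries, let b ∈ ℝᵐ, let Δ be a real number with 0 < Δ ≤ 1, let P ≥ 0 be real with Δ·P ≥ 1, and set C = Δ·P + m. Suppose x ∈ ℝⁿ satisfies x ≥ 0, A·x ≥ b componentwise, and ∑_i x_i ≤ (1+Δ)·P; suppose y ∈ ℕⁿ satisfies A·y ≥ b and ∑_i y_i ≤ (1+2Δ)·P + m; suppose x and y have the same support, of cardinality at most C + 1, and y_i ≥ x_i for every i. Then there exist x′ ∈ ℝⁿ and y′ ∈ ℕⁿ such that: x′ ≥ 0, A·x′ ≥ b, ∑_i x′_i ≤ (1+Δ)·P; A·y′ ≥ b, ∑_i y′_i ≤ (1+2Δ)·P + m; x′ and y′ have the same support, of cardinality at most C; y′_i ≥ x′_i for every i; and ∑_i |y′_i − y_i| ≤ 2·(1/Δ + 3)·(m + 2). -/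
/-!
If the support has at most `C` elements, `x` and `y` themselves work. Otherwise it has more than
`C = Δ·P + m ≥ m + 1` elements, so the average of `y` over it is at most `1/Δ + 2`. Discarding the
largest entries leaves a set `T` of `m + 1` support indices with
`∑_{i ∈ T} yᵢ ≤ (1/Δ + 2)(m + 1)` (`exists_subset_card_eq_sum_le`).

The `m + 1` columns of `A` indexed by `T` are linearly dependent, and moving `x` along a kernel
vector, oriented so that `∑ xᵢ` does not increase, until an entry of `T` vanishes gives `x'`
with `A·x' = A·x` and a smaller support (`exists_kernel_step`).

Put `u = ⌈x'⌉` on `T` and `u = y` off `T`. As at most `m` entries of `x'` on `T` are nonzero,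
`∑ uᵢ ≤ ∑ yᵢ + m`. If `∑ uᵢ` exceeds `∑ yᵢ`, then `u` is lowered, without going below `⌈x'⌉`
anywhere, until its sum is `max (∑ ⌈x'ᵢ⌉) (∑ yᵢ)` (`exists_between_sum_eq`). This respects the bound
`(1+2Δ)P + m`, because `∑ ⌈x'ᵢ⌉ ≤ ∑ x'ᵢ + |supp x'| ≤ (1+Δ)P + C`. The total change is at most
`2 ∑_{i ∈ T} yᵢ + m` on `T` plus `m` for the lowering. Covering is inherited from `x'`, since
`A ≥ 0`.
-/

/-- If the average of `f` over `S` is at most `c`, then some `k`-element subset of `S` also has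
average at most `c`: discard maximal elements one at a time. -/
theorem exists_subset_card_eq_sum_le {ι : Type*} [DecidableEq ι] (f : ι → ℝ) (c : ℝ) (k : ℕ) :
    ∀ (d : ℕ) (S : Finset ι), S.card = k + d → ∑ i ∈ S, f i ≤ c * S.card →
      ∃ T ⊆ S, T.card = k ∧ ∑ i ∈ T, f i ≤ c * k := by
  intro d
  induction d with
  | zero =>
    intro S hS hf
    refine ⟨S, subset_rfl, hS, ?_⟩
    rw [hS] at hf
    simpa using hf
  | succ d ih =>
    intro S hS hf
    have hne : S.Nonempty := by
      rw [← Finset.card_pos]; omega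
    obtain ⟨a, ha, hmax⟩ := S.exists_max_image f hne
    have hcard : (S.erase a).card = k + d := by
      rw [Finset.card_erase_of_mem ha]; omega
    have hcard' : (S.card : ℝ) = (S.erase a).card + 1 := by
      rw [hcard, hS]; push_cast; ring
    have hsum := Finset.sum_erase_add S f ha
    have hle : ∑ i ∈ S.erase a, f i ≤ c * (S.erase a).card := by
      rcases le_total c (f a) with h | h
      · rw [hcard'] at hf
        linarith
      · calc ∑ i ∈ S.erase a, f i ≤ ∑ i ∈ S.erase a, c :=
              Finset.sum_le_sum fun i hi => (hmax i (Finset.mem_of_mem_erase hi)).trans h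
          _ = c * (S.erase a).card := by rw [Finset.sum_const, nsmul_eq_mul, mul_comm]
    obtain ⟨T, hT, h1, h2⟩ := ih _ hcard hle
    exact ⟨T, hT.trans (Finset.erase_subset _ _), h1, h2⟩

theorem exists_between_sum_eq {ι : Type*} [Fintype ι] [DecidableEq ι] (l u : ι → ℕ)
    (hlu : ∀ i, l i ≤ u i) (N : ℕ) (hN : ∑ i, l i ≤ N) :
    N ≤ ∑ i, u i → ∃ w : ι → ℕ, (∀ i, l i ≤ w i) ∧ (∀ i, w i ≤ u i) ∧ ∑ i, w i = N := by
  induction N, hN using Nat.le_induction with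
  | base => exact fun _ => ⟨l, fun _ => le_rfl, hlu, rfl⟩
  | succ N hN ih =>
    intro h
    obtain ⟨w, h1, h2, h3⟩ := ih (by omega)
    obtain ⟨i, -, hi⟩ := Finset.exists_lt_of_sum_lt (s := Finset.univ) (f := w) (g := u) (by omega)
    refine ⟨w + Pi.single i 1, fun j => (h1 j).trans (by simp), fun j => ?_, ?_⟩
    · by_cases hj : j = i
      · subst hj; simpa using hi
      · simpa [hj] using h2 j
    · simp [Finset.sum_add_distrib, h3]

/-- Columns of `A` indexed by more than `m` indices are dependent; the dependency is extended by
zero to all indices and oriented so that its entries have nonpositive sum. -/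
theorem exists_kernel_vector {m n : ℕ} (A : Matrix (Fin m) (Fin n) ℝ) (T : Finset (Fin n))
    (hT : m < T.card) :
    ∃ v : Fin n → ℝ, v ≠ 0 ∧ (∀ i ∉ T, v i = 0) ∧ A.mulVec v = 0 ∧ ∑ i, v i ≤ 0 := by
  -- the linear map `w ↦ A w` restricted to vectors supported on `T`
  have hker : LinearMap.ker (Matrix.mulVecLin (A.submatrix id (Subtype.val : T → Fin n))) ≠ ⊥ :=
    LinearMap.ker_ne_bot_of_finrank_lt (by simpa using hT)
  obtain ⟨w, hw, hw0⟩ := Submodule.exists_mem_ne_zero_of_ne_bot hker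
  obtain ⟨v, hv0, hvT, hvA⟩ :
      ∃ v : Fin n → ℝ, v ≠ 0 ∧ (∀ i ∉ T, v i = 0) ∧ A.mulVec v = 0 := by
    refine ⟨fun i => if h : i ∈ T then w ⟨i, h⟩ else 0, ?_, fun i hi => by simp [hi], ?_⟩
    · intro h
      apply hw0
      ext ⟨i, hi⟩
      simpa [hi] using congrFun h i
    · ext j
      have hj := congrFun (LinearMap.mem_ker.1 hw) j
      simp only [Matrix.mulVecLin_apply, Matrix.mulVec, dotProduct, Matrix.submatrix_apply,
        id, Pi.zero_apply] at hj ⊢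
      refine Eq.trans ?_ hj
      rw [← Finset.sum_subset (Finset.subset_univ T) (fun i _ hi => by simp [hi]),
        ← Finset.sum_coe_sort T]
      exact Finset.sum_congr rfl fun i _ => by simp
  rcases le_total (∑ i, v i) 0 with h | h
  · exact ⟨v, hv0, hvT, hvA, h⟩
  · refine ⟨-v, neg_ne_zero.2 hv0, fun i hi => by simp [hvT i hi], ?_, by simpa using h⟩
    rw [Matrix.mulVec_neg, hvA, neg_zero]

/-- Move `x` along a kernel vector supported on `T` until its first entry vanishes. -/
theorem exists_kernel_step {m n : ℕ} (A : Matrix (Fin m) (Fin n) ℝ) (T : Finset (Fin n))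
    (hT : m < T.card) (x : Fin n → ℝ) (hx0 : ∀ i, 0 ≤ x i) :
    ∃ x' : Fin n → ℝ, (∀ i, 0 ≤ x' i) ∧ (∀ i ∉ T, x' i = x i) ∧ A.mulVec x' = A.mulVec x ∧
      ∑ i, x' i ≤ ∑ i, x i ∧ ∃ t ∈ T, x' t = 0 := by
  obtain ⟨v, hv0, hvT, hvA, hvs⟩ := exists_kernel_vector A T hT
  have hneg : ∃ i, v i < 0 := by
    by_contra! h
    have hz := (Finset.sum_eq_zero_iff_of_nonneg (s := Finset.univ) fun i _ => h i).1
      (le_antisymm hvs (Finset.sum_nonneg fun i _ => h i))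
    exact hv0 (funext fun i => hz i (Finset.mem_univ i))
  -- `r` is the largest step length keeping all entries nonnegative (a ratio test)
  obtain ⟨t, ht, hmin⟩ := (Finset.univ.filter fun i => v i < 0).exists_min_image
    (fun i => x i / -v i) (by obtain ⟨i, hi⟩ := hneg; exact ⟨i, by simpa using hi⟩)
  have htv : v t < 0 := by simpa using ht
  set r := x t / -v t with hr
  have hr0 : 0 ≤ r := div_nonneg (hx0 t) (by linarith)
  refine ⟨x + r • v, fun i => ?_, fun i hi => by simp [hvT i hi], ?_, ?_, t, ?_, ?_⟩
  · simp only [Pi.add_apply, Pi.smul_apply, smul_eq_mul]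
    by_cases hi : v i < 0
    · have h := hmin i (by simpa using hi)
      rw [le_div_iff₀ (by linarith)] at h
      linarith
    · have := mul_nonneg hr0 (not_lt.1 hi)
      linarith [hx0 i]
  · rw [Matrix.mulVec_add, Matrix.mulVec_smul, hvA, smul_zero, add_zero]
  · simp only [Pi.add_apply, Pi.smul_apply, smul_eq_mul, Finset.sum_add_distrib, ← Finset.mul_sum]
    have := mul_nonpos_of_nonneg_of_nonpos hr0 hvs
    linarith
  · by_contra h
    rw [hvT t h] at htv
    exact lt_irrefl _ htv
  · have hne : v t ≠ 0 := htv.ne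
    simp only [Pi.add_apply, Pi.smul_apply, smul_eq_mul, hr]
    field_simp
    ring

/-- Rounding up costs less than `1` per nonzero entry. -/
theorem sum_natCeil_le {ι : Type*} [DecidableEq ι] (x : ι → ℝ) (hx0 : ∀ i, 0 ≤ x i)
    (S : Finset ι) :
    ∑ i ∈ S, (⌈x i⌉₊ : ℝ) ≤ ∑ i ∈ S, x i + (S.filter fun i => x i ≠ 0).card := by
  rw [Finset.card_filter]
  push_cast
  rw [← Finset.sum_add_distrib]
  refine Finset.sum_le_sum fun i _ => ?_
  by_cases h : x i = 0
  · simp [h]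
  · simpa [h] using (Nat.ceil_lt_add_one (hx0 i)).le

/-- Theorem on ReduceComponents, abstract form: for a covering LP
`min {∑ xᵢ : A·x ≥ b, x ≥ 0}` with `m` constraints and nonnegative matrix `A`, given
`0 < Δ ≤ 1`, `P ≥ 0` with `Δ·P ≥ 1`, and `C = Δ·P + m`, a fractional solution `x` with
`∑ xᵢ ≤ (1+Δ)·P` and an integral solution `y` with `∑ yᵢ ≤ (1+2Δ)·P + m`, having the same
support of cardinality at most `C + 1` and `yᵢ ≥ xᵢ` for all `i`, there exist solutions
`x′, y′` with the same guarantees, support cardinality at most `C`, `y′ᵢ ≥ x′ᵢ`, and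
`∑ |y′ᵢ − yᵢ| ≤ 2·(1/Δ + 3)·(m + 2)`. -/
theorem reduce_components (m n : ℕ) (A : Matrix (Fin m) (Fin n) ℝ)
    (hA : ∀ i j, 0 ≤ A i j) (b : Fin m → ℝ)
    (Δ : ℝ) (hΔ : 0 < Δ) (hΔ1 : Δ ≤ 1)
    (P : ℝ) (hP : 0 ≤ P) (hΔP : 1 ≤ Δ * P)
    (C : ℝ) (hC : C = Δ * P + (m : ℝ))
    (x : Fin n → ℝ) (y : Fin n → ℕ)
    (hx0 : ∀ i, 0 ≤ x i)
    (hAx : ∀ j, b j ≤ A.mulVec x j)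
    (hxsum : ∑ i, x i ≤ (1 + Δ) * P)
    (hAy : ∀ j, b j ≤ A.mulVec (fun i => (y i : ℝ)) j)
    (hysum : (∑ i, (y i : ℝ)) ≤ (1 + 2 * Δ) * P + (m : ℝ))
    (hsupp : {i : Fin n | x i ≠ 0} = {i : Fin n | y i ≠ 0})
    (hcard : ({i : Fin n | x i ≠ 0}.ncard : ℝ) ≤ C + 1)
    (hxy : ∀ i, x i ≤ (y i : ℝ)) :
    ∃ (x' : Fin n → ℝ) (y' : Fin n → ℕ),
      (∀ i, 0 ≤ x' i) ∧
      (∀ j, b j ≤ A.mulVec x' j) ∧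
      (∑ i, x' i ≤ (1 + Δ) * P) ∧
      (∀ j, b j ≤ A.mulVec (fun i => (y' i : ℝ)) j) ∧
      ((∑ i, (y' i : ℝ)) ≤ (1 + 2 * Δ) * P + (m : ℝ)) ∧
      {i : Fin n | x' i ≠ 0} = {i : Fin n | y' i ≠ 0} ∧
      (({i : Fin n | x' i ≠ 0}.ncard : ℝ) ≤ C) ∧
      (∀ i, x' i ≤ (y' i : ℝ)) ∧
      (∑ i, |(y' i : ℝ) - (y i : ℝ)|) ≤ 2 * (1 / Δ + 3) * ((m : ℝ) + 2) := by
  classical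
  have hΔinv : 0 < 1 / Δ := by positivity
  by_cases hk : ({i : Fin n | x i ≠ 0}.ncard : ℝ) ≤ C
  · exact ⟨x, y, hx0, hAx, hxsum, hAy, hysum, hsupp, hk, hxy, by simpa using by positivity⟩
  push Not at hk
  set S : Finset (Fin n) := Finset.univ.filter fun i => x i ≠ 0 with hS
  have hncard : ∀ z : Fin n → ℝ, {i : Fin n | z i ≠ 0}.ncard =
      (Finset.univ.filter fun i => z i ≠ 0).card := fun z => by
    rw [← Set.ncard_coe_finset]; simp
  rw [hncard x, ← hS] at hk hcard
  have hsupp' : ∀ i, x i = 0 ↔ y i = 0 := fun i => not_iff_not.1 (Set.ext_iff.1 hsupp i)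
  have hSm : m + 1 < S.card := by
    have : ((m + 1 : ℕ) : ℝ) < S.card := by push_cast; linarith
    exact_mod_cast this
  have hySum : ∑ i ∈ S, (y i : ℝ) ≤ (1 / Δ + 2) * S.card := by
    have h1 : ∑ i ∈ S, (y i : ℝ) ≤ ∑ i, (y i : ℝ) :=
      Finset.sum_le_sum_of_subset_of_nonneg (Finset.subset_univ _) fun _ _ _ => by positivity
    have h2 : (1 / Δ + 2) * C ≤ (1 / Δ + 2) * S.card := by gcongr
    have h3 : (1 / Δ + 2) * C = (1 + 2 * Δ) * P + (1 / Δ + 2) * m := by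
      rw [hC]; field_simp
    have h4 : 0 ≤ (1 / Δ) * (m : ℝ) := by positivity
    have h5 : (0 : ℝ) ≤ m := by positivity
    linarith
  obtain ⟨T, hTS, hTc, hTy⟩ := exists_subset_card_eq_sum_le (fun i => (y i : ℝ)) (1 / Δ + 2) (m + 1)
    (S.card - (m + 1)) S (by omega) hySum
  obtain ⟨x', hx'0, hx'T, hx'A, hx's, t, htT, ht0⟩ := exists_kernel_step A T (by omega) x hx0
  have hTnz : ((T.filter fun i => x' i ≠ 0).card : ℝ) ≤ m := by
    have hsub : (T.filter fun i => x' i ≠ 0) ⊆ T.erase t := by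
      intro i hi
      rw [Finset.mem_filter] at hi
      exact Finset.mem_erase.2 ⟨fun h => hi.2 (h ▸ ht0), hi.1⟩
    have := Finset.card_le_card hsub
    rw [Finset.card_erase_of_mem htT, hTc] at this
    exact_mod_cast this
  have hS' : ((Finset.univ.filter fun i => x' i ≠ 0).card : ℝ) ≤ C := by
    have hsub : (Finset.univ.filter fun i => x' i ≠ 0) ⊆ S.erase t := by
      intro i hi
      have hi' : x' i ≠ 0 := by simpa using hi
      refine Finset.mem_erase.2 ⟨fun h => hi' (h ▸ ht0), ?_⟩
      by_cases hiT : i ∈ T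
      · exact hTS hiT
      · rw [hx'T i hiT] at hi'
        simpa [hS] using hi'
    have h1 := Finset.card_le_card hsub
    rw [Finset.card_erase_of_mem (hTS htT)] at h1
    have h2 : (Finset.univ.filter fun i => x' i ≠ 0).card + 1 ≤ S.card := by omega
    have h3 : ((Finset.univ.filter fun i => x' i ≠ 0).card : ℝ) + 1 ≤ S.card := by
      exact_mod_cast h2
    linarith
  have hlsum : ∑ i, (⌈x' i⌉₊ : ℝ) ≤ (1 + 2 * Δ) * P + m := by
    have := sum_natCeil_le x' hx'0 Finset.univ
    linarith
  set u : Fin n → ℕ := fun i => if i ∈ T then ⌈x' i⌉₊ else y i with hu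
  have huT : ∀ i ∈ T, u i = ⌈x' i⌉₊ := fun i hi => by simp [hu, hi]
  have huT' : ∀ i ∉ T, u i = y i := fun i hi => by simp [hu, hi]
  have hlu : ∀ i, ⌈x' i⌉₊ ≤ u i := by
    intro i
    by_cases hi : i ∈ T
    · rw [huT i hi]
    · rw [huT' i hi, hx'T i hi]
      exact Nat.ceil_le.2 (hxy i)
  -- splitting sums over `T` and its complement, where `x'` and `u` agree with `x` and `y`
  have hx'Tsum : ∑ i ∈ T, x' i ≤ ∑ i ∈ T, (y i : ℝ) := by
    have h1 := Finset.sum_add_sum_compl T x'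
    have h2 := Finset.sum_add_sum_compl T x
    have h3 : ∑ i ∈ Tᶜ, x' i = ∑ i ∈ Tᶜ, x i :=
      Finset.sum_congr rfl fun i hi => hx'T i (Finset.mem_compl.1 hi)
    have h4 : ∑ i ∈ T, x i ≤ ∑ i ∈ T, (y i : ℝ) := Finset.sum_le_sum fun i _ => hxy i
    linarith
  have huTsum : ∑ i ∈ T, (u i : ℝ) ≤ ∑ i ∈ T, (y i : ℝ) + m := by
    have h1 := sum_natCeil_le x' hx'0 T
    have h2 : ∑ i ∈ T, (u i : ℝ) = ∑ i ∈ T, (⌈x' i⌉₊ : ℝ) :=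
      Finset.sum_congr rfl fun i hi => by rw [huT i hi]
    linarith
  have husum : ∑ i, (u i : ℝ) ≤ ∑ i, (y i : ℝ) + m := by
    have h1 := Finset.sum_add_sum_compl T fun i => (u i : ℝ)
    have h2 := Finset.sum_add_sum_compl T fun i => (y i : ℝ)
    have h3 : ∑ i ∈ Tᶜ, (u i : ℝ) = ∑ i ∈ Tᶜ, (y i : ℝ) :=
      Finset.sum_congr rfl fun i hi => by rw [huT' i (Finset.mem_compl.1 hi)]
    linarith
  have hlu_sum : ∑ i, ⌈x' i⌉₊ ≤ ∑ i, u i := Finset.sum_le_sum fun i _ => hlu i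
  obtain ⟨w, hlw, hwu, hwsum⟩ := exists_between_sum_eq (fun i => ⌈x' i⌉₊) u hlu
    (max (∑ i, ⌈x' i⌉₊) (min (∑ i, u i) (∑ i, y i))) (le_max_left _ _)
    (max_le hlu_sum (min_le_left _ _))
  have hwR : ∑ i, (w i : ℝ) =
      max (∑ i, (⌈x' i⌉₊ : ℝ)) (min (∑ i, (u i : ℝ)) (∑ i, (y i : ℝ))) := by
    exact_mod_cast hwsum
  have hxw : ∀ i, x' i ≤ (w i : ℝ) := fun i =>
    (Nat.le_ceil _).trans (by exact_mod_cast hlw i)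
  refine ⟨x', w, hx'0, fun j => by rw [hx'A]; exact hAx j, hx's.trans hxsum, fun j => ?_, ?_, ?_,
    by rw [hncard]; exact hS', hxw, ?_⟩
  · have h1 : b j ≤ A.mulVec x' j := by rw [hx'A]; exact hAx j
    have h2 : A.mulVec x' j ≤ A.mulVec (fun i => (w i : ℝ)) j := by
      simp only [Matrix.mulVec, dotProduct]
      exact Finset.sum_le_sum fun i _ => mul_le_mul_of_nonneg_left (hxw i) (hA j i)
    exact h1.trans h2
  · rw [hwR]
    exact max_le hlsum ((min_le_right _ _).trans hysum)
  · ext i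
    refine not_congr ⟨fun h => ?_, fun h => ?_⟩
    · have hui : u i = 0 := by
        by_cases hi : i ∈ T
        · rw [huT i hi, h, Nat.ceil_zero]
        · rw [huT' i hi, ← hsupp', ← hx'T i hi, h]
      exact Nat.le_zero.1 (hui ▸ hwu i)
    · have := hxw i
      rw [h, Nat.cast_zero] at this
      exact le_antisymm this (hx'0 i)
  · have hlower : ∑ i, |(w i : ℝ) - u i| ≤ m := by
      have h1 : ∑ i, |(w i : ℝ) - u i| = ∑ i, (u i : ℝ) - ∑ i, (w i : ℝ) := by
        rw [← Finset.sum_sub_distrib]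
        refine Finset.sum_congr rfl fun i _ => ?_
        have : (w i : ℝ) ≤ u i := by exact_mod_cast hwu i
        rw [abs_of_nonpos (by linarith)]
        ring
      have h2 : min (∑ i, (u i : ℝ)) (∑ i, (y i : ℝ)) ≤ ∑ i, (w i : ℝ) := hwR ▸ le_max_right _ _
      have h3 : (0 : ℝ) ≤ m := by positivity
      rcases min_le_iff.1 h2 with h | h <;> linarith
    have hchange : ∑ i, |(u i : ℝ) - y i| ≤ 2 * ∑ i ∈ T, (y i : ℝ) + m := by
      have h1 : ∑ i, |(u i : ℝ) - y i| = ∑ i ∈ T, |(u i : ℝ) - y i| :=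
        (Finset.sum_subset (Finset.subset_univ T) fun i _ hi => by simp [huT' i hi]).symm
      have h2 : ∑ i ∈ T, |(u i : ℝ) - y i| ≤ ∑ i ∈ T, ((u i : ℝ) + y i) := by
        refine Finset.sum_le_sum fun i _ => ?_
        have h3 : (0 : ℝ) ≤ u i := by positivity
        have h4 : (0 : ℝ) ≤ y i := by positivity
        rw [abs_le]
        constructor <;> linarith
      rw [Finset.sum_add_distrib] at h2
      linarith
    have htri : ∑ i, |(w i : ℝ) - y i| ≤ ∑ i, |(w i : ℝ) - u i| + ∑ i, |(u i : ℝ) - y i| := by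
      rw [← Finset.sum_add_distrib]
      exact Finset.sum_le_sum fun i _ => abs_sub_le _ _ _
    push_cast at hTy
    have h3 : (0 : ℝ) ≤ m := by positivity
    nlinarith
end

section
/- Let m, n be natural numbers, let Δ be a real number with 0 < Δ ≤ 1, let P ≥ 0 be real, and let y ∈ ℝⁿ with y ≥ 0 componentwise and ∑_i y_i ≤ (1+2Δ)·P + m. Suppose there is a set T of indices with |T| = m + 2 such that y_i > 0 for all i ∈ T, y_j ≥ y_i for every j ∉ T with y_j > 0 and every i ∈ T, and ∑_{i∈T} y_i ≥ (1/Δ + 2)·(m + 2). Then the number of indices i with y_i > 0 is at most Δ·P + m. -/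
/-!
Put `c = 1/Δ + 2`. The components of `y` indexed by `T` have average at least `c`, and every nonzero
component outside `T` is at least each of them, hence at least their average. So the nonzero
components of `y`, of which there are `N` say, satisfy `c * N ≤ ∑ yᵢ ≤ (1 + 2Δ) P + m`. Since
`1 + 2Δ = c Δ` and `c ≥ 1`, the right-hand side is at most `c (Δ P + m)`; divide by `c`.
-/

/-- Case 1 of ReduceComponents: Let `0 < Δ ≤ 1`, `P ≥ 0`, and `y ∈ ℝⁿ`
with `y ≥ 0` and `∑ yᵢ ≤ (1+2Δ)·P + m`. Suppose `T` is a set of indices with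
`|T| = m + 2`, `yᵢ > 0` for `i ∈ T`, every nonzero component outside `T` is at least
every component in `T`, and `∑_{i∈T} yᵢ ≥ (1/Δ + 2)·(m + 2)`. Then the number of
nonzero components of `y` is at most `Δ·P + m`. -/
theorem few_nonzero_components (m n : ℕ) (Δ P : ℝ)
    (hΔ : 0 < Δ) (hΔ1 : Δ ≤ 1) (hP : 0 ≤ P)
    (y : Fin n → ℝ) (hy : ∀ i, 0 ≤ y i)
    (hsum : ∑ i, y i ≤ (1 + 2 * Δ) * P + (m : ℝ))
    (T : Finset (Fin n)) (hT : T.card = m + 2)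
    (hTpos : ∀ i ∈ T, 0 < y i)
    (hTmin : ∀ j ∉ T, 0 < y j → ∀ i ∈ T, y i ≤ y j)
    (hTsum : (1 / Δ + 2) * ((m : ℝ) + 2) ≤ ∑ i ∈ T, y i) :
    ({i : Fin n | 0 < y i}.ncard : ℝ) ≤ Δ * P + (m : ℝ) := by
  set c : ℝ := 1 / Δ + 2 with hc
  have hc1 : 1 ≤ c := by
    have : 0 < 1 / Δ := by positivity
    linarith
  have hcΔ : 1 + 2 * Δ = c * Δ := by
    rw [hc]
    field_simp
  set S : Finset (Fin n) := Finset.univ.filter (fun i => 0 < y i) with hS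
  have hcard : {i : Fin n | 0 < y i}.ncard = S.card := by
    rw [← Set.ncard_coe_finset]
    simp [hS]
  have hTS : T ⊆ S := fun i hi => by simpa [hS] using hTpos i hi
  have hout : ∀ j ∈ S \ T, c ≤ y j := by
    intro j hj
    obtain ⟨hjS, hjT⟩ := Finset.mem_sdiff.mp hj
    have hjpos : 0 < y j := by simpa [hS] using hjS
    have h := Finset.sum_le_card_nsmul T y (y j) (hTmin j hjT hjpos)
    rw [hT, nsmul_eq_mul] at h
    push_cast at h
    have hm : (0 : ℝ) < (m : ℝ) + 2 := by positivity
    exact le_of_mul_le_mul_right (by linarith) hm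
  have h1 : ((S \ T).card : ℝ) * c ≤ ∑ i ∈ S \ T, y i := by
    simpa [nsmul_eq_mul] using Finset.card_nsmul_le_sum (S \ T) y c hout
  have h2 : ((S \ T).card : ℝ) + ((m : ℝ) + 2) = S.card := by
    have h := Finset.card_sdiff_add_card_eq_card hTS
    rw [hT] at h
    exact_mod_cast h
  have h3 : ∑ i ∈ S \ T, y i + ∑ i ∈ T, y i = ∑ i ∈ S, y i := Finset.sum_sdiff hTS
  have h4 : ∑ i ∈ S, y i ≤ ∑ i, y i :=
    Finset.sum_le_sum_of_subset_of_nonneg (Finset.subset_univ S) fun i _ _ => hy i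
  have h5 : (m : ℝ) ≤ c * m := le_mul_of_one_le_left (Nat.cast_nonneg m) hc1
  rw [hcard]
  refine le_of_mul_le_mul_left ?_ (lt_of_lt_of_le one_pos hc1)
  calc c * (S.card : ℝ) = ((S \ T).card : ℝ) * c + c * ((m : ℝ) + 2) := by rw [← h2]; ring
    _ ≤ (1 + 2 * Δ) * P + m := by linarith
    _ ≤ c * (Δ * P + m) := by rw [hcΔ]; linarith
end
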